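/- For every n ≥ 2, α(n+1; 2, 1, 2, 3, …, n) = −Σ_{j=2}^{n} (j−1)·α(n−1; 1, 2, …, j−1, j+1, …, n), where α(n−1; 1,…,j−1,j+1,…,n) counts the Monotone Triangles of size n−1 with bottom row (1,…,n) with the entry j deleted (this count equals the number of Alternating Sign Matrices of size n whose first row has its unique 1 in column j). -/

import Mathlib

/-- A triangular array of size `n`, encoded as a function `ℕ → ℕ → ℤ` whose
meaningful entries are `a i j` for `1 ≤ j ≤ i ≤ n` (row `i` has entries
`a i 1, …, a i i`), normalized to be `0` outside this region. -/
def IsTri (n : ℕ) (a : ℕ → ℕ → ℤ) : Prop :=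
  ∀ i j, ¬ (1 ≤ j ∧ j ≤ i ∧ i ≤ n) → a i j = 0

/-- A Monotone Triangle of size `n`: strict increase along rows and weak
increase along North-East and South-East diagonals. -/
def IsMT (n : ℕ) (a : ℕ → ℕ → ℤ) : Prop :=
  IsTri n a ∧
  (∀ i j, 1 ≤ j → j + 1 ≤ i → i ≤ n → a i j < a i (j + 1)) ∧
  (∀ i j, 1 ≤ j → j ≤ i → i + 1 ≤ n →
    a (i + 1) j ≤ a i j ∧ a i j ≤ a (i + 1) (j + 1))

/-- A Generalized Monotone Triangle (GMT) of size `n`. -/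
def IsGMT (n : ℕ) (a : ℕ → ℕ → ℤ) : Prop :=
  IsTri n a ∧
  -- (1) each entry is weakly bounded by its SW- and SE-neighbour
  (∀ i j, 1 ≤ j → j ≤ i → i + 1 ≤ n →
    min (a (i + 1) j) (a (i + 1) (j + 1)) ≤ a i j ∧
    a i j ≤ max (a (i + 1) j) (a (i + 1) (j + 1))) ∧
  -- (2) three weakly increasing consecutive entries force strict increase above
  (∀ i j, 1 ≤ j → j + 1 ≤ i → i + 1 ≤ n →
    a (i + 1) j ≤ a (i + 1) (j + 1) → a (i + 1) (j + 1) ≤ a (i + 1) (j + 2) →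
    a i j < a i (j + 1)) ∧
  -- (3) equality over a strict descent forces an equal neighbour
  (∀ i j, 1 ≤ j → j ≤ i → i + 1 ≤ n →
    (a i j = a (i + 1) j → a (i + 1) (j + 1) < a (i + 1) j →
      2 ≤ j ∧ a i (j - 1) = a i j) ∧
    (a (i + 1) (j + 1) < a (i + 1) j → a (i + 1) (j + 1) = a i j →
      j + 1 ≤ i ∧ a i (j + 1) = a i j))

/-- The bottom row of a triangular array of size `n` is `(k 0, …, k (n-1))`
(1-indexed in the array). -/
def BottomRow (n : ℕ) (a : ℕ → ℕ → ℤ) (k : Fin n → ℤ) : Prop :=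
  ∀ j : Fin n, a n (j.1 + 1) = k j

/-- The set of Monotone Triangles of size `n` with bottom row `k`. -/
def MTset (n : ℕ) (k : Fin n → ℤ) : Set (ℕ → ℕ → ℤ) :=
  {a | IsMT n a ∧ BottomRow n a k}

/-- The set `𝒢ₙ(k)` of Generalized Monotone Triangles of size `n` with bottom row `k`. -/
def GMTset (n : ℕ) (k : Fin n → ℤ) : Set (ℕ → ℕ → ℤ) :=
  {a | IsGMT n a ∧ BottomRow n a k}

/-- The positions `(i, j)` of newcomers of a triangular array:
`a (i+1) j > a i j > a (i+1) (j+1)`. -/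
def newcomersF (n : ℕ) (a : ℕ → ℕ → ℤ) : Finset (ℕ × ℕ) :=
  ((Finset.range (n + 1)) ×ˢ (Finset.range (n + 1))).filter (fun p =>
    1 ≤ p.2 ∧ p.2 ≤ p.1 ∧ p.1 + 1 ≤ n ∧
    a p.1 p.2 < a (p.1 + 1) p.2 ∧ a (p.1 + 1) (p.2 + 1) < a p.1 p.2)

/-- The positions `(i, j)` of sign-changing pairs `(a i j, a i (j+1))` of a
triangular array: two equal consecutive entries whose interlaced neighbour
below is also equal to them. -/
def scPairsF (n : ℕ) (a : ℕ → ℕ → ℤ) : Finset (ℕ × ℕ) :=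
  ((Finset.range (n + 1)) ×ˢ (Finset.range (n + 1))).filter (fun p =>
    1 ≤ p.2 ∧ p.2 + 1 ≤ p.1 ∧ p.1 + 1 ≤ n ∧
    a p.1 p.2 = a p.1 (p.2 + 1) ∧ a (p.1 + 1) (p.2 + 1) = a p.1 p.2)

/-- `sc(A)`: the total number of newcomers and sign-changing pairs of `A`. -/
def scT (n : ℕ) (a : ℕ → ℕ → ℤ) : ℕ :=
  (newcomersF n a).card + (scPairsF n a).card

/-- `IsAlpha N f` asserts that `f` is the polynomial function
`α(N; k₁, …, k_N)`: it is given by a polynomial with rational coefficients of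
degree at most `N - 1` in each variable, and its value at every strictly
increasing integer sequence equals the number of Monotone Triangles with that
bottom row. -/
def IsAlpha (N : ℕ) (f : (Fin N → ℤ) → ℚ) : Prop :=
  (∃ P : MvPolynomial (Fin N) ℚ, (∀ i : Fin N, P.degreeOf i ≤ N - 1) ∧
    ∀ k : Fin N → ℤ, f k = MvPolynomial.eval (fun i => (k i : ℚ)) P) ∧
  (∀ k : Fin N → ℤ, StrictMono k → f k = ((MTset N k).ncard : ℚ))


/-!
Fix a strictly increasing row `m = (m₀, m₁, …)`. As a function of `x`, the number of Monotone
Triangles with bottom row `(x, m)` agrees for `x < m₀` with a polynomial: the row above `(x, m)` is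
`(y, t)` with `t` interlacing `m` and `x ≤ y ≤ m₀`, so the polynomial is a sum of antidifferences of
the polynomials attached to the rows `t`. An antidifference evaluated one step beyond its upper
limit of summation is minus the summand there. The upper limit is `m₀`, excluded, if `t₀ = m₀` and
included if `m₀ < t₀`; hence at `x = m₀ + 1` only the rows `t` with `t₀ = m₀` survive, each with a
sign, while at `x = m₀` only the others do, each contributing a count.

For `m = (1, …, n)` the rows `t` with `t₀ = 1` are `(1, …, n)` with some `j ≥ 2` deleted. At
`x = 1` the polynomial of such a `t` counts the Monotone Triangles whose bottom row is `(1, …, n)`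
with some `i ≥ j` deleted. Every `i` arises from the `i - 1` values `2 ≤ j ≤ i`, which is the weight
in the theorem.
-/

open Matrix Polynomial

section Counting

variable {n : ℕ}

/-- The strictly increasing rows that may stand directly above the row `k` in a Monotone
Triangle. -/
noncomputable def interlacing (k : Fin (n + 1) → ℤ) : Finset (Fin n → ℤ) :=
  open Classical in
  (Fintype.piFinset fun i : Fin n => Finset.Icc (k i.castSucc) (k i.succ)).filter StrictMono

theorem mem_interlacing {k : Fin (n + 1) → ℤ} {l : Fin n → ℤ} :
    l ∈ interlacing k ↔ (∀ i, k i.castSucc ≤ l i ∧ l i ≤ k i.succ) ∧ StrictMono l := by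
  simp [interlacing]

/-- The row `k` of a triangular array in the 1-indexed encoding of `IsTri`, padded with zeros. -/
def paddedRow (k : Fin n → ℤ) (j : ℕ) : ℤ :=
  if h : 1 ≤ j ∧ j ≤ n then k ⟨j - 1, by omega⟩ else 0

theorem exists_eq_val_add_one {j : ℕ} (hj : 1 ≤ j) (hjn : j ≤ n) : ∃ i : Fin n, j = i + 1 :=
  ⟨⟨j - 1, by omega⟩, by simp; omega⟩

theorem paddedRow_val_add_one (k : Fin n → ℤ) (i : Fin n) : paddedRow k (i + 1) = k i := by
  simp [paddedRow]

theorem paddedRow_castSucc (k : Fin (n + 1) → ℤ) (i : Fin n) :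
    paddedRow k (i + 1) = k i.castSucc :=
  paddedRow_val_add_one k i.castSucc

theorem paddedRow_succ (k : Fin (n + 1) → ℤ) (i : Fin n) : paddedRow k (i + 1 + 1) = k i.succ :=
  paddedRow_val_add_one k i.succ

theorem paddedRow_eq_zero {k : Fin n → ℤ} {j : ℕ} (h : ¬ (1 ≤ j ∧ j ≤ n)) :
    paddedRow k j = 0 :=
  dif_neg h

theorem BottomRow.eq_paddedRow {a : ℕ → ℕ → ℤ} {k : Fin n → ℤ} (hk : BottomRow n a k)
    (ha : IsTri n a) : a n = paddedRow k := by
  ext j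
  by_cases hj : 1 ≤ j ∧ j ≤ n
  · obtain ⟨i, rfl⟩ := exists_eq_val_add_one hj.1 hj.2
    rw [hk i, paddedRow_val_add_one]
  · rw [paddedRow_eq_zero hj, ha n j (by omega)]

theorem IsTri.row_succ_eq_zero {a : ℕ → ℕ → ℤ} (ha : IsTri n a) : a (n + 1) = 0 :=
  funext fun j => ha (n + 1) j (by omega)

/-- The array of size `n + 1` obtained from the array `a` of size `n` by adding the bottom row
`k`. -/
def appendRow (k : Fin (n + 1) → ℤ) (a : ℕ → ℕ → ℤ) : ℕ → ℕ → ℤ :=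
  Function.update a (n + 1) (paddedRow k)

theorem appendRow_apply_last (k : Fin (n + 1) → ℤ) (a : ℕ → ℕ → ℤ) :
    appendRow k a (n + 1) = paddedRow k :=
  Function.update_self ..

theorem appendRow_apply_of_ne (k : Fin (n + 1) → ℤ) (a : ℕ → ℕ → ℤ) {i : ℕ} (hi : i ≠ n + 1) :
    appendRow k a i = a i :=
  Function.update_of_ne hi ..

theorem injOn_appendRow (k : Fin (n + 1) → ℤ) : Set.InjOn (appendRow k) {a | IsTri n a} := by
  intro a ha b hb hab
  ext1 i
  by_cases hi : i = n + 1
  · rw [hi, IsTri.row_succ_eq_zero ha, IsTri.row_succ_eq_zero hb]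
  · rw [← appendRow_apply_of_ne k a hi, hab, appendRow_apply_of_ne k b hi]

theorem appendRow_mem_MTset {k : Fin (n + 1) → ℤ} (hk : StrictMono k) {l : Fin n → ℤ}
    (hl : l ∈ interlacing k) {a : ℕ → ℕ → ℤ} (ha : a ∈ MTset n l) :
    appendRow k a ∈ MTset (n + 1) k := by
  obtain ⟨⟨htri, hrow, hdiag⟩, hbot⟩ := ha
  refine ⟨⟨fun i j hij => ?_, fun i j hj hji hi => ?_, fun i j hj hji hi => ?_⟩, fun j => ?_⟩
  · by_cases hin : i = n + 1
    · rw [hin, appendRow_apply_last, paddedRow_eq_zero (by omega)]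
    · rw [appendRow_apply_of_ne k a hin, htri i j (by omega)]
  · by_cases hin : i = n + 1
    · obtain ⟨s, rfl⟩ := exists_eq_val_add_one (n := n) hj (by omega)
      rw [hin, appendRow_apply_last, paddedRow_castSucc, paddedRow_succ]
      exact hk s.castSucc_lt_succ
    · rw [appendRow_apply_of_ne k a hin]
      exact hrow i j hj hji (by omega)
  · rw [appendRow_apply_of_ne k a (i := i) (by omega)]
    by_cases hin : i = n
    · subst hin
      obtain ⟨s, rfl⟩ := exists_eq_val_add_one hj hji
      rw [appendRow_apply_last, hbot s, paddedRow_castSucc, paddedRow_succ]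
      exact (mem_interlacing.1 hl).1 s
    · rw [appendRow_apply_of_ne k a (i := i + 1) (by omega)]
      exact hdiag i j hj hji (by omega)
  · rw [appendRow_apply_last, paddedRow_val_add_one]

theorem IsMT.row_mem_interlacing {a : ℕ → ℕ → ℤ} {k : Fin (n + 1) → ℤ} (ha : IsMT (n + 1) a)
    (hk : BottomRow (n + 1) a k) : (fun j : Fin n => a n (j + 1)) ∈ interlacing k := by
  refine mem_interlacing.2 ⟨fun i => ?_, fun i j hij => ?_⟩
  · rw [← hk i.castSucc, ← hk i.succ]
    exact ha.2.2 n (i + 1) (by omega) (by omega) le_rfl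
  · have hrow : StrictMonoOn (a n) (Set.Icc 1 n) :=
      strictMonoOn_of_lt_add_one Set.ordConnected_Icc fun j _ hj hj' =>
        ha.2.1 n j hj.1 hj'.2 (by omega)
    exact hrow ⟨by omega, by omega⟩ ⟨by omega, by omega⟩ (by simpa using hij)

theorem IsMT.update_zero {a : ℕ → ℕ → ℤ} (ha : IsMT (n + 1) a) :
    IsMT n (Function.update a (n + 1) 0) := by
  obtain ⟨htri, hrow, hdiag⟩ := ha
  refine ⟨fun i j hij => ?_, fun i j hj hji hi => ?_, fun i j hj hji hi => ?_⟩
  · by_cases hin : i = n + 1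
    · rw [hin, Function.update_self, Pi.zero_apply]
    · rw [Function.update_of_ne hin]
      exact htri i j (by omega)
  · rw [Function.update_of_ne (by omega)]
    exact hrow i j hj hji (by omega)
  · rw [Function.update_of_ne (by omega), Function.update_of_ne (by omega)]
    exact hdiag i j hj hji (by omega)

theorem exists_appendRow_eq {a : ℕ → ℕ → ℤ} {k : Fin (n + 1) → ℤ} (ha : a ∈ MTset (n + 1) k) :
    ∃ l ∈ interlacing k, ∃ b ∈ MTset n l, appendRow k b = a := by
  obtain ⟨hmt, hbot⟩ := ha
  refine ⟨_, hmt.row_mem_interlacing hbot, Function.update a (n + 1) 0, ⟨hmt.update_zero, ?_⟩, ?_⟩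
  · intro j
    rw [Function.update_of_ne (by omega)]
  · rw [appendRow, Function.update_idem, ← hbot.eq_paddedRow hmt.1, Function.update_eq_self]

theorem MTset_succ {k : Fin (n + 1) → ℤ} (hk : StrictMono k) :
    MTset (n + 1) k = ⋃ l ∈ interlacing k, appendRow k '' MTset n l := by
  refine Set.Subset.antisymm (fun a ha => ?_) ?_
  · simpa using exists_appendRow_eq ha
  · simp only [Set.iUnion_subset_iff, Set.image_subset_iff]
    exact fun l hl a ha => appendRow_mem_MTset hk hl ha

theorem MTset_zero (k : Fin 0 → ℤ) : MTset 0 k = {0} := by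
  refine Set.Subset.antisymm (fun a ha => ?_) ?_
  · exact funext₂ fun i j => ha.1.1 i j (by omega)
  · rintro _ rfl
    exact ⟨⟨fun _ _ _ => rfl, by omega, by omega⟩, fun j => j.elim0⟩

theorem finite_MTset {n : ℕ} (k : Fin n → ℤ) : (MTset n k).Finite := by
  induction n with
  | zero => simp [MTset_zero]
  | succ n ih =>
    refine ((interlacing k).finite_toSet.biUnion fun l _ => (ih l).image (appendRow k)).subset ?_
    intro a ha
    simpa using exists_appendRow_eq ha

theorem pairwiseDisjoint_appendRow_image (k : Fin (n + 1) → ℤ) (s : Set (Fin n → ℤ)) :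
    s.PairwiseDisjoint fun l => appendRow k '' MTset n l := by
  intro l _ l' _ hne
  refine Set.disjoint_left.2 ?_
  rintro _ ⟨a, ha, rfl⟩ ⟨b, hb, hab⟩
  obtain rfl : b = a := injOn_appendRow k hb.1.1 ha.1.1 hab
  exact hne (funext fun j => (ha.2 j).symm.trans (hb.2 j))

theorem ncard_MTset_succ {k : Fin (n + 1) → ℤ} (hk : StrictMono k) :
    (MTset (n + 1) k).ncard = ∑ l ∈ interlacing k, (MTset n l).ncard := by
  have hcard (l : Fin n → ℤ) : (appendRow k '' MTset n l).ncard = (MTset n l).ncard :=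
    ((injOn_appendRow k).mono fun _ ha => ha.1.1).ncard_image
  have hunion := (interlacing k).finite_toSet.ncard_biUnion
    (fun l _ => (finite_MTset l).image (appendRow k)) (pairwiseDisjoint_appendRow_image k _)
  simpa only [MTset_succ hk, Finset.mem_coe, hcard, finsum_mem_finset_eq_sum] using hunion

end Counting

section Antidifference

/-- An indefinite sum of the polynomial `R`, in terms of Bernoulli polynomials. -/
noncomputable def antidifference (R : ℚ[X]) : ℚ[X] :=
  R.sum fun d a => C (a / (d + 1)) * Polynomial.bernoulli (d + 1)

theorem antidifference_eval_add_one (R : ℚ[X]) (x : ℚ) :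
    (antidifference R).eval (x + 1) = (antidifference R).eval x + R.eval x := by
  rw [antidifference, eval_sum, eval_sum, eval_eq_sum (p := R)]
  simp only [sum_def]
  rw [← Finset.sum_add_distrib]
  refine Finset.sum_congr rfl fun d _ => ?_
  have hd : (d : ℚ) + 1 ≠ 0 := by positivity
  simp only [eval_mul, eval_C]
  rw [add_comm x, Polynomial.bernoulli_eval_one_add, Nat.add_sub_cancel]
  push_cast
  field_simp

/-- The polynomial extrapolating the sum of `R` over the integers of `[x, c)`, as a function of
the lower limit `x`. -/
noncomputable def sumBelow (R : ℚ[X]) (c : ℤ) : ℚ[X] :=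
  C ((antidifference R).eval (c : ℚ)) - antidifference R

variable (R : ℚ[X])

theorem sumBelow_eval_of_le {c x : ℤ} (hx : x ≤ c) :
    (sumBelow R c).eval (x : ℚ) = ∑ y ∈ Finset.Ico x c, R.eval (y : ℚ) := by
  induction c, hx using Int.leInduction with
  | base => simp [sumBelow]
  | succ c hx ih =>
    rw [← Finset.insert_Ico_right_eq_Ico_add_one hx, Finset.sum_insert (by simp), ← ih]
    simp only [sumBelow, eval_sub, eval_C, Int.cast_add, Int.cast_one,
      antidifference_eval_add_one]
    ring

theorem sumBelow_eval_self (c : ℤ) : (sumBelow R c).eval (c : ℚ) = 0 := by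
  simp [sumBelow]

theorem sumBelow_add_one_eval (c : ℤ) : (sumBelow R (c + 1)).eval (c : ℚ) = R.eval (c : ℚ) := by
  simp [sumBelow, antidifference_eval_add_one]

theorem sumBelow_eval_add_one (c : ℤ) :
    (sumBelow R c).eval ((c : ℚ) + 1) = - R.eval (c : ℚ) := by
  simp [sumBelow, antidifference_eval_add_one]

end Antidifference

section HeadPoly

variable {n : ℕ}

open Classical in
/-- For `t` interlacing `m`, the exclusive upper bound of the integers `y` such that `(y, t)` may
stand above a row `(x, m)`. -/
noncomputable def headBound (m : Fin (n + 1) → ℤ) (t : Fin n → ℤ) : ℤ :=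
  if StrictMono (vecCons (m 0) t) then m 0 + 1 else m 0

theorem le_headBound (m : Fin (n + 1) → ℤ) (t : Fin n → ℤ) : m 0 ≤ headBound m t := by
  unfold headBound
  split_ifs <;> omega

theorem strictMono_vecCons_of_mem_interlacing {m : Fin (n + 1) → ℤ} {t : Fin n → ℤ} {y : ℤ}
    (ht : t ∈ interlacing m) (hy : y < m 0) : StrictMono (vecCons y t) := by
  obtain ⟨hmt, htmono⟩ := mem_interlacing.1 ht
  cases n with
  | zero => exact Subsingleton.strictMono _
  | succ n => exact strictMono_vecCons.2 ⟨hy.trans_le (hmt 0).1, htmono⟩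

theorem lt_headBound_iff {m : Fin (n + 1) → ℤ} {t : Fin n → ℤ} {y : ℤ} (ht : t ∈ interlacing m) :
    y < headBound m t ↔ y ≤ m 0 ∧ StrictMono (vecCons y t) := by
  rcases lt_trichotomy y (m 0) with hy | rfl | hy
  · exact iff_of_true (hy.trans_le (le_headBound m t))
      ⟨hy.le, strictMono_vecCons_of_mem_interlacing ht hy⟩
  · unfold headBound
    split_ifs with h <;> simp [h]
  · refine iff_of_false (fun h => ?_) fun h => by omega
    unfold headBound at h
    split_ifs at h <;> omega

theorem vecCons_mem_interlacing {x y : ℤ} {m : Fin (n + 1) → ℤ} {t : Fin n → ℤ} :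
    vecCons y t ∈ interlacing (vecCons x m) ↔
      t ∈ interlacing m ∧ x ≤ y ∧ y < headBound m t := by
  have hmem : vecCons y t ∈ interlacing (vecCons x m) ↔
      t ∈ interlacing m ∧ x ≤ y ∧ y ≤ m 0 ∧ StrictMono (vecCons y t) := by
    have htail (h : StrictMono (vecCons y t)) : StrictMono t := h.comp Fin.strictMono_succ
    simp only [mem_interlacing, Fin.forall_fin_succ, Fin.castSucc_zero, cons_val_zero,
      cons_val_succ, ← Fin.succ_castSucc]
    tauto
  rw [hmem]
  exact and_congr_right fun ht => and_congr_right fun _ => (lt_headBound_iff ht).symm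

theorem ncard_MTset_vecCons {x : ℤ} {m : Fin (n + 1) → ℤ} (h : StrictMono (vecCons x m)) :
    (MTset (n + 2) (vecCons x m)).ncard =
      ∑ t ∈ interlacing m, ∑ y ∈ Finset.Ico x (headBound m t),
        (MTset (n + 1) (vecCons y t)).ncard := by
  rw [ncard_MTset_succ h, Finset.sum_sigma']
  refine Finset.sum_nbij' (fun l => ⟨vecTail l, vecHead l⟩) (fun p => vecCons p.2 p.1)
    ?_ ?_ ?_ ?_ ?_
  · intro l hl
    rw [← cons_head_tail l, vecCons_mem_interlacing] at hl
    simpa using hl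
  · rintro ⟨t, y⟩ hty
    exact vecCons_mem_interlacing.2 (by simpa using hty)
  · exact fun l _ => cons_head_tail l
  · exact fun p _ => rfl
  · exact fun l _ => by rw [cons_head_tail]

/-- The polynomial in `x` extrapolating the number of Monotone Triangles with bottom row `(x, m)`
from `x < m 0` to all `x`, that is `α(n + 1; x, m)`. -/
noncomputable def headPoly : {n : ℕ} → (Fin n → ℤ) → ℚ[X]
  | 0, _ => 1
  | _ + 1, m => ∑ t ∈ interlacing m, sumBelow (headPoly t) (headBound m t)

theorem headPoly_succ (m : Fin (n + 1) → ℤ) :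
    headPoly m = ∑ t ∈ interlacing m, sumBelow (headPoly t) (headBound m t) := by
  rw [headPoly]

theorem headPoly_eval {n : ℕ} {m : Fin n → ℤ} {x : ℤ} (h : StrictMono (vecCons x m)) :
    (headPoly m).eval (x : ℚ) = (MTset (n + 1) (vecCons x m)).ncard := by
  induction n generalizing x with
  | zero =>
    have hrow : interlacing (vecCons x m) = {![]} := by
      ext l
      simp [mem_interlacing, Subsingleton.strictMono, Subsingleton.elim l ![]]
    simp [headPoly, ncard_MTset_succ h, hrow, MTset_zero]
  | succ n ih =>
    have hx : x < m 0 := (strictMono_vecCons.1 h).1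
    rw [headPoly_succ, ncard_MTset_vecCons h, eval_finsetSum, Nat.cast_sum]
    refine Finset.sum_congr rfl fun t ht => ?_
    rw [sumBelow_eval_of_le _ (hx.le.trans (le_headBound m t)), Nat.cast_sum]
    refine Finset.sum_congr rfl fun y hy => ?_
    exact ih ((lt_headBound_iff ht).1 (Finset.mem_Ico.1 hy).2).2

open Classical in
theorem headPoly_eval_head (m : Fin (n + 1) → ℤ) :
    (headPoly m).eval (m 0 : ℚ) =
      ∑ t ∈ interlacing m with StrictMono (vecCons (m 0) t),
        ((MTset (n + 1) (vecCons (m 0) t)).ncard : ℚ) := by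
  rw [headPoly_succ, eval_finsetSum, Finset.sum_filter]
  refine Finset.sum_congr rfl fun t _ => ?_
  unfold headBound
  split_ifs with h
  · rw [sumBelow_add_one_eval, headPoly_eval h]
  · exact sumBelow_eval_self _ _

open Classical in
theorem headPoly_eval_head_add_one (m : Fin (n + 1) → ℤ) :
    (headPoly m).eval ((m 0 : ℚ) + 1) =
      - ∑ t ∈ interlacing m with ¬ StrictMono (vecCons (m 0) t),
        (headPoly t).eval (m 0 : ℚ) := by
  rw [headPoly_succ, eval_finsetSum, Finset.sum_filter, ← Finset.sum_neg_distrib]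
  refine Finset.sum_congr rfl fun t _ => ?_
  unfold headBound
  split_ifs with h
  · simpa using sumBelow_eval_self (headPoly t) (m 0 + 1)
  · exact sumBelow_eval_add_one _ _

theorem infinite_setOf_strictMono_vecCons {m : Fin n → ℤ} (hm : StrictMono m) :
    {x : ℤ | StrictMono (vecCons x m)}.Infinite := by
  cases n with
  | zero => simpa [Subsingleton.strictMono] using Set.infinite_univ
  | succ n => exact (Set.Iio_infinite (m 0)).mono fun x hx => strictMono_vecCons.2 ⟨hx, hm⟩

theorem IsAlpha.apply_vecCons {f : (Fin (n + 1) → ℤ) → ℚ} (hf : IsAlpha (n + 1) f)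
    {m : Fin n → ℤ} (hm : StrictMono m) (x : ℤ) :
    f (vecCons x m) = (headPoly m).eval (x : ℚ) := by
  obtain ⟨⟨P, -, hP⟩, hcount⟩ := hf
  set p : ℚ[X] := (MvPolynomial.finSuccEquiv ℚ n P).map (MvPolynomial.eval fun i => (m i : ℚ))
  have hp (y : ℤ) : f (vecCons y m) = p.eval (y : ℚ) := by
    rw [hP, ← MvPolynomial.eval_eq_eval_mv_eval']
    congr 2
    ext i
    cases i using Fin.cases <;> simp
  have hpoly : p = headPoly m := by
    refine eq_of_infinite_eval_eq _ _ (((infinite_setOf_strictMono_vecCons hm).image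
      (Int.cast_injective (α := ℚ)).injOn).mono ?_)
    rintro _ ⟨y, hy, rfl⟩
    rw [Set.mem_ofPred_eq, ← hp, headPoly_eval hy, hcount _ hy]
  rw [hp, hpoly]

end HeadPoly

section DeletedRow

variable {n : ℕ}

/-- The row `(1, …, n)`. -/
def initialRow (n : ℕ) (i : Fin n) : ℤ := i + 1

theorem strictMono_initialRow (n : ℕ) : StrictMono (initialRow n) := fun i j hij => by
  simpa [initialRow] using hij

/-- The row `(1, …, n + 1)` with the entry `j + 1` deleted, where `j` is 0-indexed. -/
def deletedRow (j : Fin (n + 1)) (t : Fin n) : ℤ := (j.succAbove t : ℕ) + 1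

theorem strictMono_deletedRow (j : Fin (n + 1)) : StrictMono (deletedRow j) := by
  intro s t hst
  have := j.strictMono_succAbove hst
  unfold deletedRow
  omega

theorem deletedRow_apply (j : Fin (n + 1)) (t : Fin n) :
    deletedRow j t = if (t : ℕ) < j then (t : ℤ) + 1 else t + 2 := by
  simp only [deletedRow, Fin.succAbove, Fin.lt_def, Fin.val_castSucc]
  split_ifs
  · simp
  · simp [add_assoc]

theorem val_add_one_le_deletedRow (j : Fin (n + 1)) (t : Fin n) : (t : ℤ) + 1 ≤ deletedRow j t := by
  rw [deletedRow_apply]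
  split_ifs <;> omega

theorem deletedRow_le_val_add_two (j : Fin (n + 1)) (t : Fin n) : deletedRow j t ≤ t + 2 := by
  rw [deletedRow_apply]
  split_ifs <;> omega

theorem deletedRow_le_deletedRow_iff {i j : Fin (n + 1)} :
    deletedRow i ≤ deletedRow j ↔ j ≤ i := by
  constructor
  · contrapose!
    intro hij h
    have hi : deletedRow i ⟨i, by omega⟩ ≤ deletedRow j ⟨i, by omega⟩ := h _
    simp only [deletedRow_apply, lt_irrefl, if_false, Fin.lt_def.1 hij, if_true] at hi
    omega
  · intro hji t
    change deletedRow i t ≤ deletedRow j t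
    rw [deletedRow_apply, deletedRow_apply]
    split_ifs <;> omega

theorem deletedRow_injective : Function.Injective (deletedRow (n := n)) := fun _ _ h =>
  le_antisymm (deletedRow_le_deletedRow_iff.1 h.ge) (deletedRow_le_deletedRow_iff.1 h.le)

theorem deletedRow_zero_eq_one_iff {j : Fin (n + 2)} : deletedRow j 0 = 1 ↔ j ≠ 0 := by
  rw [deletedRow_apply, ← Fin.pos_iff_ne_zero, Fin.lt_def]
  split_ifs with h <;> simpa using h

theorem strictMono_vecCons_one_deletedRow_iff {j : Fin (n + 2)} :
    StrictMono (vecCons 1 (deletedRow j)) ↔ j = 0 := by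
  have hone := val_add_one_le_deletedRow j 0
  rw [strictMono_vecCons, and_iff_left (strictMono_deletedRow j),
    ← not_iff_not, ← ne_eq j, ← deletedRow_zero_eq_one_iff]
  simp at hone
  omega

theorem vecCons_one_vecTail_deletedRow {j : Fin (n + 2)} (hj : j ≠ 0) :
    vecCons 1 (vecTail (deletedRow j)) = deletedRow j := by
  rw [← deletedRow_zero_eq_one_iff.2 hj]
  exact cons_head_tail (deletedRow j)

theorem exists_succAbove_eq_of_strictMono {v : Fin n → Fin (n + 1)} (hv : StrictMono v) :
    ∃ j : Fin (n + 1), j.succAbove = v := by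
  obtain ⟨j, hj⟩ : ∃ j, j ∉ Set.range v := by
    by_contra! h
    simpa using Fintype.card_le_of_surjective v h
  have hrange (t : Fin n) : ∃ s, j.succAbove s = v t := Fin.exists_succAbove_eq fun h => hj ⟨t, h⟩
  choose w hw using hrange
  have hwmono : StrictMono w := fun s t hst => by
    rw [← Fin.succAbove_lt_succAbove_iff (p := j), hw, hw]
    exact hv hst
  refine ⟨j, funext fun t => ?_⟩
  rw [← hw, hwmono.eq_id, id]

theorem exists_deletedRow_eq {u : Fin n → ℤ} (hu : StrictMono u)
    (h : ∀ t, 1 ≤ u t ∧ u t ≤ n + 1) : ∃ j, deletedRow j = u := by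
  have hval (t : Fin n) : ∃ v : Fin (n + 1), (v : ℤ) + 1 = u t :=
    ⟨⟨(u t - 1).toNat, by have := h t; omega⟩, by have := h t; simp; omega⟩
  choose v hv using hval
  obtain ⟨j, rfl⟩ := exists_succAbove_eq_of_strictMono (v := v) fun s t hst => by
    have := hu hst
    rw [← hv, ← hv] at this
    omega
  exact ⟨j, funext hv⟩

theorem mem_interlacing_initialRow_iff {u : Fin n → ℤ} :
    u ∈ interlacing (initialRow (n + 1)) ↔ ∃ j, deletedRow j = u := by
  simp only [mem_interlacing, initialRow, Fin.val_castSucc, Fin.val_succ]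
  constructor
  · rintro ⟨hbound, hu⟩
    exact exists_deletedRow_eq hu fun t => by have := hbound t; omega
  · rintro ⟨j, rfl⟩
    refine ⟨fun t => ⟨val_add_one_le_deletedRow j t, ?_⟩, strictMono_deletedRow j⟩
    have := deletedRow_le_val_add_two j t
    omega

theorem vecTail_deletedRow_mem_interlacing {i j : Fin (n + 2)} (hji : j ≤ i) :
    vecTail (deletedRow i) ∈ interlacing (deletedRow j) := by
  refine mem_interlacing.2 ⟨fun t => ⟨?_, ?_⟩, (strictMono_deletedRow i).comp Fin.strictMono_succ⟩
  · calc
      deletedRow j t.castSucc ≤ t + 2 := deletedRow_le_val_add_two j t.castSucc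
      _ = (t.succ : ℕ) + 1 := by rw [Fin.val_succ]; omega
      _ ≤ deletedRow i t.succ := val_add_one_le_deletedRow i t.succ
  · exact deletedRow_le_deletedRow_iff.2 hji t.succ

theorem mem_interlacing_deletedRow_iff {j : Fin (n + 2)} (hj : j ≠ 0) {s : Fin n → ℤ} :
    s ∈ interlacing (deletedRow j) ∧ StrictMono (vecCons 1 s) ↔
      ∃ i, j ≤ i ∧ vecTail (deletedRow i) = s := by
  constructor
  · rintro ⟨hs, hmono⟩
    have hge (t : Fin (n + 1)) : 1 ≤ vecCons 1 s t := hmono.monotone t.zero_le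
    have hle : vecCons 1 s ≤ deletedRow j :=
      Fin.cases (deletedRow_zero_eq_one_iff.2 hj).ge fun t => ((mem_interlacing.1 hs).1 t).2
    obtain ⟨i, hi⟩ := exists_deletedRow_eq hmono fun t =>
      ⟨hge t, (hle t).trans ((deletedRow_le_val_add_two j t).trans (by omega))⟩
    exact ⟨i, deletedRow_le_deletedRow_iff.1 (hi ▸ hle), by rw [hi, tail_cons]⟩
  · rintro ⟨i, hji, rfl⟩
    rw [vecCons_one_vecTail_deletedRow (ne_bot_of_le_ne_bot hj hji)]
    exact ⟨vecTail_deletedRow_mem_interlacing hji, strictMono_deletedRow i⟩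

theorem headPoly_deletedRow_eval_one {j : Fin (n + 2)} (hj : j ≠ 0) :
    (headPoly (deletedRow j)).eval 1 =
      ∑ i ∈ Finset.Ici j, ((MTset (n + 1) (deletedRow i)).ncard : ℚ) := by
  classical
  have hcons {i : Fin (n + 2)} (hi : i ∈ Finset.Ici j) :
      vecCons 1 (vecTail (deletedRow i)) = deletedRow i :=
    vecCons_one_vecTail_deletedRow (ne_bot_of_le_ne_bot hj (Finset.mem_Ici.1 hi))
  have hrows : {s ∈ interlacing (deletedRow j) | StrictMono (vecCons 1 s)} =
      (Finset.Ici j).image fun i => vecTail (deletedRow i) := by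
    ext s
    rw [Finset.mem_filter, mem_interlacing_deletedRow_iff hj]
    simp
  have hinj : Set.InjOn (fun i => vecTail (deletedRow i)) (Finset.Ici j) := fun i hi i' hi' h =>
    deletedRow_injective ((hcons hi).symm.trans ((congrArg (vecCons 1) h).trans (hcons hi')))
  have heval := headPoly_eval_head (deletedRow j)
  rw [deletedRow_zero_eq_one_iff.2 hj, Int.cast_one, hrows, Finset.sum_image hinj] at heval
  rw [heval]
  exact Finset.sum_congr rfl fun i hi => by rw [hcons hi]

theorem headPoly_initialRow_eval_two (n : ℕ) :
    (headPoly (initialRow (n + 2))).eval 2 =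
      - ∑ i : Fin (n + 2), (i : ℚ) * (MTset (n + 1) (deletedRow i)).ncard := by
  classical
  have hrows : {t ∈ interlacing (initialRow (n + 2)) | ¬ StrictMono (vecCons 1 t)} =
      ({j | j ≠ 0} : Finset (Fin (n + 2))).image deletedRow := by
    ext t
    simp only [Finset.mem_filter, Finset.mem_image, mem_interlacing_initialRow_iff]
    constructor
    · rintro ⟨⟨j, rfl⟩, hj⟩
      exact ⟨j, ⟨Finset.mem_univ j, mt strictMono_vecCons_one_deletedRow_iff.2 hj⟩, rfl⟩
    · rintro ⟨j, ⟨-, hj⟩, rfl⟩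
      exact ⟨⟨j, rfl⟩, mt strictMono_vecCons_one_deletedRow_iff.1 hj⟩
  have hone : initialRow (n + 2) 0 = 1 := rfl
  have heval := headPoly_eval_head_add_one (initialRow (n + 2))
  rw [hone, Int.cast_one, one_add_one_eq_two, hrows,
    Finset.sum_image deletedRow_injective.injOn] at heval
  rw [heval]
  congr 1
  calc
    _ = ∑ j : Fin (n + 2) with j ≠ 0, ∑ i ∈ Finset.Ici j,
          ((MTset (n + 1) (deletedRow i)).ncard : ℚ) :=
      Finset.sum_congr rfl fun j hj => headPoly_deletedRow_eval_one (Finset.mem_filter.1 hj).2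
    _ = ∑ i : Fin (n + 2), ∑ _j ∈ Finset.Ioc 0 i, ((MTset (n + 1) (deletedRow i)).ncard : ℚ) :=
      Finset.sum_comm' fun j i => by simp [Fin.pos_iff_ne_zero]
    _ = ∑ i : Fin (n + 2), (i : ℚ) * (MTset (n + 1) (deletedRow i)).ncard := by simp

theorem sum_Icc_two_eq_sum_fin (g : ℕ → ℚ) (n : ℕ) :
    ∑ j ∈ Finset.Icc 2 (n + 2), ((j : ℚ) - 1) * g j =
      ∑ i : Fin (n + 2), (i : ℚ) * g (i + 1) := by
  rw [Fin.sum_univ_eq_sum_range fun i => (i : ℚ) * g (i + 1), Finset.sum_range_succ',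
    ← Finset.Ico_add_one_right_eq_Icc, Finset.sum_Ico_eq_sum_range, Nat.cast_zero, zero_mul,
    add_zero]
  refine Finset.sum_congr (by simp) fun i _ => ?_
  rw [add_comm 2 i]
  push_cast
  ring

end DeletedRow

/-- For every `n ≥ 2`,
`α(n+1; 2,1,2,3,…,n) = -Σ_{j=2}^{n} (j-1)·α(n-1; 1,…,ĵ,…,n)`,
where the `j`-th summand's argument is `(1,…,n)` with the entry `j` deleted
(this count equals the number of ASMs of size `n` whose first row's unique `1`
is in column `j`). -/
theorem alpha_2123n_weighted (n : ℕ) (hn : 2 ≤ n)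
    (α1 : (Fin (n + 1) → ℤ) → ℚ) (hα1 : IsAlpha (n + 1) α1)
    (α2 : (Fin (n - 1) → ℤ) → ℚ) (hα2 : IsAlpha (n - 1) α2) :
    α1 (fun j => if j.1 = 0 then 2 else (j.1 : ℤ)) =
      - ∑ j ∈ Finset.Icc 2 n,
          ((j : ℚ) - 1) *
            α2 (fun t => if t.1 + 1 < j then (t.1 : ℤ) + 1 else (t.1 : ℤ) + 2) := by
  obtain ⟨n, rfl⟩ : ∃ N, n = N + 2 := ⟨n - 2, by omega⟩
  have hrow : (fun j : Fin (n + 2 + 1) => if j.1 = 0 then 2 else (j.1 : ℤ)) =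
      vecCons 2 (initialRow (n + 2)) := by
    ext j
    cases j using Fin.cases <;> simp [initialRow]
  have hdeleted (i : Fin (n + 2)) :
      (fun t : Fin (n + 1) => if t.1 + 1 < (i : ℕ) + 1 then (t.1 : ℤ) + 1 else (t.1 : ℤ) + 2) =
        deletedRow i := by
    ext t
    simp only [deletedRow_apply, add_lt_add_iff_right]
  calc
    α1 _ = (headPoly (initialRow (n + 2))).eval 2 := by
      rw [hrow, hα1.apply_vecCons (strictMono_initialRow _), Int.cast_ofNat]
    _ = - ∑ i : Fin (n + 2), (i : ℚ) * (MTset (n + 1) (deletedRow i)).ncard :=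
      headPoly_initialRow_eval_two n
    _ = - ∑ i : Fin (n + 2), (i : ℚ) * α2 (deletedRow i) := by
      simp only [hα2.2 _ (strictMono_deletedRow _), Nat.add_one_sub_one]
    _ = _ := by
      rw [sum_Icc_two_eq_sum_fin fun j => α2 fun t => if t.1 + 1 < j then t.1 + 1 else t.1 + 2]
      exact congrArg Neg.neg (Finset.sum_congr rfl fun i _ =>
        congrArg (fun k => (i : ℚ) * α2 k) (hdeleted i).symm)
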